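/- arXiv:2412.21048 — 3 statements merged into one kernel-verified Lean document; each statement's English description precedes it below -/
import Mathlib

section
/- Fix an integer j with 1 ≤ j ≤ n−1 and define K_j(x,z) = binom(n−1, j) · ∫₀¹ χ(x) ψ(x + z/t) t^{−(n+1−j)} dt. Then there is a constant C (depending on n, j, χ, ψ, d) such that |K_j(x,z)| ≤ C |z|^{−(n−j)} for all x ∈ ℝⁿ and all z ≠ 0; moreover K_j(x,z) = 0 whenever |z| > d. -/
open MeasureTheory Metric Set Filter Topology

/-!
If `χ x * ψ (x + z / t) ≠ 0`, then `x` and `x + z / t` lie in a common set of diameter `d`, so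
`t ≥ ‖z‖ / d`. For `‖z‖ > d` no `t < 1` qualifies and the kernel vanishes; otherwise the kernel is
at most a constant times `∫ t in Ioi (‖z‖ / d), t ^ (-(p + 1))`, a multiple of `‖z‖ ^ (-p)`.
-/

lemma integral_Ioi_rpow_neg_add_one {p c : ℝ} (hp : 0 < p) (hc : 0 < c) :
    ∫ t in Ioi c, t ^ (-(p + 1)) = c ^ (-p) / p := by
  rw [integral_Ioi_rpow_of_lt (by linarith) hc, show -(p + 1) + 1 = -p by ring, neg_div_neg_eq]

lemma mem_closedBall_zero_diam {E : Type*} [SeminormedAddCommGroup E] {S : Set E}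
    (hS : Bornology.IsBounded S) {x w : E} (hx : x ∈ S) (hxw : x + w ∈ S) :
    w ∈ closedBall 0 (diam S) := by
  simpa only [mem_closedBall_zero_iff, dist_eq_norm, add_sub_cancel_left]
    using dist_le_diam_of_mem hS hxw hx

lemma apply_inv_smul_eq_zero_of_mul_lt_norm {E F : Type*} [SeminormedAddCommGroup E]
    [NormedSpace ℝ E] [Zero F] {g : E → F} {D t : ℝ} {z : E}
    (hg : Function.support g ⊆ closedBall 0 D) (ht : 0 < t) (htz : D * t < ‖z‖) :
    g (t⁻¹ • z) = 0 := by
  by_contra hne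
  have hle : ‖t⁻¹ • z‖ ≤ D := mem_closedBall_zero_iff.1 (hg hne)
  rw [norm_smul, norm_inv, Real.norm_of_nonneg ht.le, inv_mul_le_iff₀ ht, mul_comm] at hle
  exact hle.not_gt htz

section RayIntegral

variable {E F : Type*} [NormedAddCommGroup E] [NormedSpace ℝ E]
  [NormedAddCommGroup F] [NormedSpace ℝ F]

/-- The weighted integral `∫₀¹ t ^ (-(p + 1)) g(z / t) dt` of `g` over the ray from `z` to infinity,
of which the kernels `K_j(x, ·)` are instances. The exponent is shifted so that, over the whole ray
`t > 0`, the integral is homogeneous of degree `-p` in `z`. -/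
noncomputable def rayIntegral (p : ℝ) (g : E → F) (z : E) : F :=
  ∫ t in Ioo (0 : ℝ) 1, t ^ (-(p + 1)) • g (t⁻¹ • z)

lemma rayIntegral_natCast (m : ℕ) (g : E → F) (z : E) :
    rayIntegral m g z = ∫ t in Ioo (0 : ℝ) 1, (t ^ (m + 1))⁻¹ • g (t⁻¹ • z) := by
  simp only [rayIntegral, ← Nat.cast_add_one, Real.rpow_neg_natCast, zpow_neg, zpow_natCast]

variable {g : E → F} {D : ℝ}

lemma rayIntegral_eq_zero (p : ℝ) {z : E} (hg : Function.support g ⊆ closedBall 0 D)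
    (hz : D < ‖z‖) : rayIntegral p g z = 0 :=
  setIntegral_eq_zero_of_forall_eq_zero fun t ht ↦ by
    have htz : D * t < ‖z‖ := (mul_lt_mul_of_pos_right hz ht.1).trans_le
      (mul_le_of_le_one_right (norm_nonneg z) ht.2.le)
    rw [apply_inv_smul_eq_zero_of_mul_lt_norm hg ht.1 htz, smul_zero]

lemma rayIntegral_eq_setIntegral_inter_Ici (p : ℝ) {z : E} (hD : 0 < D)
    (hg : Function.support g ⊆ closedBall 0 D) :
    rayIntegral p g z = ∫ t in Ioo 0 1 ∩ Ici (‖z‖ / D), t ^ (-(p + 1)) • g (t⁻¹ • z) := by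
  refine setIntegral_eq_of_subset_of_forall_sdiff_eq_zero measurableSet_Ioo inter_subset_left
    fun t ⟨ht, htz⟩ ↦ ?_
  have hlt : t < ‖z‖ / D := not_le.1 fun hle ↦ htz ⟨ht, hle⟩
  rw [apply_inv_smul_eq_zero_of_mul_lt_norm hg ht.1 ((lt_div_iff₀' hD).1 hlt), smul_zero]

lemma norm_rayIntegral_le_integral_Ioi {p M : ℝ} {z : E} (hp : 0 < p) (hD : 0 < D)
    (hM : ∀ w, ‖g w‖ ≤ M) (hg : Function.support g ⊆ closedBall 0 D) (hz : z ≠ 0) :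
    ‖rayIntegral p g z‖ ≤ ∫ t in Ioi (‖z‖ / D), t ^ (-(p + 1)) * M := by
  have hc : 0 < ‖z‖ / D := div_pos (norm_pos_iff.2 hz) hD
  have hM0 : 0 ≤ M := (norm_nonneg _).trans (hM 0)
  have hint : IntegrableOn (fun t : ℝ ↦ t ^ (-(p + 1)) * M) (Ici (‖z‖ / D)) :=
    (integrableOn_Ici_iff_integrableOn_Ioi (by finiteness)).2
      ((integrableOn_Ioi_rpow_of_lt (by linarith) hc).mul_const M)
  have hbound : ∀ t ∈ Ioo 0 1 ∩ Ici (‖z‖ / D),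
      ‖t ^ (-(p + 1)) • g (t⁻¹ • z)‖ ≤ t ^ (-(p + 1)) * M := fun t ht ↦ by
    have hpow : 0 ≤ t ^ (-(p + 1)) := Real.rpow_nonneg ht.1.1.le _
    rw [norm_smul, Real.norm_of_nonneg hpow]
    exact mul_le_mul_of_nonneg_left (hM _) hpow
  have hnonneg : ∀ t ∈ Ici (‖z‖ / D), 0 ≤ t ^ (-(p + 1)) * M := fun t ht ↦
    mul_nonneg (Real.rpow_nonneg (hc.le.trans ht) _) hM0
  calc ‖rayIntegral p g z‖
      = ‖∫ t in Ioo 0 1 ∩ Ici (‖z‖ / D), t ^ (-(p + 1)) • g (t⁻¹ • z)‖ := by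
        rw [rayIntegral_eq_setIntegral_inter_Ici p hD hg]
    _ ≤ ∫ t in Ioo 0 1 ∩ Ici (‖z‖ / D), t ^ (-(p + 1)) * M :=
        norm_integral_le_of_norm_le (hint.mono_set inter_subset_right)
          (ae_restrict_of_forall_mem (measurableSet_Ioo.inter measurableSet_Ici) hbound)
    _ ≤ ∫ t in Ici (‖z‖ / D), t ^ (-(p + 1)) * M :=
        setIntegral_mono_set hint (ae_restrict_of_forall_mem measurableSet_Ici hnonneg)
          inter_subset_right.eventuallyLE
    _ = ∫ t in Ioi (‖z‖ / D), t ^ (-(p + 1)) * M := integral_Ici_eq_integral_Ioi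

lemma norm_rayIntegral_le {p M : ℝ} {z : E} (hp : 0 < p) (hD : 0 ≤ D)
    (hM : ∀ w, ‖g w‖ ≤ M) (hg : Function.support g ⊆ closedBall 0 D) (hz : z ≠ 0) :
    ‖rayIntegral p g z‖ ≤ M * D ^ p / p * ‖z‖ ^ (-p) := by
  have hM0 : 0 ≤ M := (norm_nonneg _).trans (hM 0)
  rcases lt_or_ge D ‖z‖ with hlt | hge
  · rw [rayIntegral_eq_zero p hg hlt, norm_zero]
    positivity
  · have hz0 : 0 < ‖z‖ := norm_pos_iff.2 hz
    have hD0 : 0 < D := hz0.trans_le hge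
    calc ‖rayIntegral p g z‖
        ≤ ∫ t in Ioi (‖z‖ / D), t ^ (-(p + 1)) * M :=
          norm_rayIntegral_le_integral_Ioi hp hD0 hM hg hz
      _ = (‖z‖ / D) ^ (-p) / p * M := by
          rw [integral_mul_const, integral_Ioi_rpow_neg_add_one hp (div_pos hz0 hD0)]
      _ = M * D ^ p / p * ‖z‖ ^ (-p) := by
          rw [Real.div_rpow hz0.le hD, Real.rpow_neg hD, div_inv_eq_mul]
          ring

theorem Kj_size_bound_general {p : ℝ} (hp : 0 < p) {S : Set E} (hS : Bornology.IsBounded S)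
    {χ : E → ℝ} {ψ : E → F} {A B : ℝ} (hA : ∀ x, ‖χ x‖ ≤ A) (hB : ∀ y, ‖ψ y‖ ≤ B)
    (hχS : Function.support χ ⊆ S) (hψS : Function.support ψ ⊆ S) (a : ℝ) {K : E → E → F}
    (hK : ∀ x z, K x z = a • rayIntegral p (fun w ↦ χ x • ψ (x + w)) z) :
    ∃ C : ℝ, ∀ x z, z ≠ 0 →
      ‖K x z‖ ≤ C * ‖z‖ ^ (-p) ∧ (diam S < ‖z‖ → K x z = 0) := by
  refine ⟨‖a‖ * (A * B * diam S ^ p / p), fun x z hz ↦ ?_⟩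
  have hsupp : Function.support (fun w ↦ χ x • ψ (x + w)) ⊆ closedBall 0 (diam S) := fun w hw ↦
    mem_closedBall_zero_diam hS (hχS (smul_ne_zero_iff.1 hw).1) (hψS (smul_ne_zero_iff.1 hw).2)
  have hbound : ∀ w, ‖χ x • ψ (x + w)‖ ≤ A * B := fun w ↦ by
    rw [norm_smul]
    exact mul_le_mul (hA x) (hB _) (norm_nonneg _) ((norm_nonneg _).trans (hA x))
  rw [hK]
  constructor
  · rw [norm_smul, mul_assoc]
    gcongr
    exact norm_rayIntegral_le hp diam_nonneg hbound hsupp hz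
  · intro hlt
    rw [rayIntegral_eq_zero p hsupp hlt, smul_zero]

end RayIntegral

/-- For `1 ≤ j ≤ n−1`, the kernel
`K_j(x,z) = C(n−1,j) ∫₀¹ χ(x) ψ(x + z/t) t^{−(n+1−j)} dt` satisfies
`|K_j(x,z)| ≲ |z|^{−(n−j)}` and vanishes for `|z| > d`. -/
theorem Kj_size_bound
    (n : ℕ) (hn : 2 ≤ n)
    (Ω B : Set (EuclideanSpace ℝ (Fin n)))
    (hΩo : IsOpen Ω) (hΩb : Bornology.IsBounded Ω)
    (hBball : ∃ c r, 0 < r ∧ B = Metric.ball c r)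
    (hBΩ : B ⊆ Ω)
    (hstar : ∀ x ∈ Ω, ∀ y ∈ B, segment ℝ x y ⊆ Ω)
    (Bt : Set (EuclideanSpace ℝ (Fin n)))
    (hBt : ∃ c r, 0 < r ∧ Bt = Metric.ball c r)
    (hΩBt : closure Ω ⊆ Bt)
    (d : ℝ) (hd : d = Metric.diam Bt)
    (χ : EuclideanSpace ℝ (Fin n) → ℝ)
    (hχ : ContDiff ℝ (⊤ : ℕ∞) χ) (hχc : HasCompactSupport χ)
    (hχsupp : tsupport χ ⊆ Bt) (hχ1 : ∀ x ∈ Ω, χ x = 1)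
    (ψ : EuclideanSpace ℝ (Fin n) → ℝ)
    (hψ : ContDiff ℝ (⊤ : ℕ∞) ψ) (hψc : HasCompactSupport ψ)
    (hψsupp : tsupport ψ ⊆ B) (hψint : ∫ x, ψ x = 0)
    (j : ℕ) (hj1 : 1 ≤ j) (hjn : j ≤ n - 1)
    (Kj : EuclideanSpace ℝ (Fin n) → EuclideanSpace ℝ (Fin n) → ℝ)
    (hKj : ∀ x z, Kj x z = (n - 1).choose j *
      ∫ t in Set.Ioo (0:ℝ) 1, χ x * ψ (x + t⁻¹ • z) * (t ^ (n + 1 - j))⁻¹) :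
    ∃ C : ℝ, ∀ x z : EuclideanSpace ℝ (Fin n), z ≠ 0 →
      |Kj x z| ≤ C * (‖z‖ ^ (n - j))⁻¹ ∧ (d < ‖z‖ → Kj x z = 0) := by
  obtain ⟨c, r, -, rfl⟩ := hBt
  obtain ⟨A, hA⟩ := hχc.exists_bound_of_continuous hχ.continuous
  obtain ⟨M, hM⟩ := hψc.exists_bound_of_continuous hψ.continuous
  have hp : (0 : ℝ) < (n - j : ℕ) := Nat.cast_pos.2 (by omega)
  have hχS : Function.support χ ⊆ ball c r := (subset_tsupport χ).trans hχsupp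
  have hψS : Function.support ψ ⊆ ball c r :=
    (subset_tsupport ψ).trans <| hψsupp.trans <| hBΩ.trans <| subset_closure.trans hΩBt
  have hK : ∀ x z, Kj x z = ((n - 1).choose j : ℝ) •
      rayIntegral (n - j : ℕ) (fun w ↦ χ x • ψ (x + w)) z := fun x z ↦ by
    simp only [hKj, rayIntegral_natCast, smul_eq_mul, mul_comm, Nat.sub_add_comm (by omega : j ≤ n)]
  simpa only [hd, Real.norm_eq_abs, Real.rpow_neg_natCast, zpow_neg, zpow_natCast]
    using Kj_size_bound_general hp isBounded_ball hA hM hχS hψS _ hK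
end

section
/- Fix an integer j with 1 ≤ j ≤ n−1 and define K_j(x,z) = binom(n−1, j) · ∫₀¹ χ(x) ψ(x + z/t) t^{−(n+1−j)} dt. Then for every α with 0 < α < 1 there is a constant C (depending on α, n, j, χ, ψ, d) such that for all x, x̄, y ∈ ℝⁿ with 0 < |x−y| ≤ |x̄−y| one has |K_j(x, x−y) − K_j(x̄, x̄−y)| ≤ C |x−x̄|^α / |x−y|^{n−j+α}. -/
open MeasureTheory Metric Set Filter Topology

/-!
Let the weight satisfy `|w t| ≤ A * t ^ (-(β + 1))`, with `β = n - j` for `K_j`. On the support of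
the integrand both `x` and `x + z/t` lie in a fixed ball of radius `R`, so `t > ‖z‖ / (2R)`. Since
`‖x - y‖ ≤ ‖x' - y‖`, both integrals run over `t > a = ‖x - y‖ / (2R)` only. For fixed `y` and `t`,
`x ↦ χ x * ψ (x + (x - y)/t)` is Hölder of exponent `α` with constant `O(t ^ (-α))`, because
`x ↦ x + (x - y)/t` expands distances by `1 + 1/t ≤ 2/t`. Integrating
`t ^ (-α) * t ^ (-(β + 1))` over `t > a` gives `a ^ (-(β + α)) / (β + α)`.
-/

open scoped NNReal

section Holder

variable {X Y F : Type*}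

theorem memHolder_of_lipschitzWith_of_isBounded_range [PseudoMetricSpace X]
    [PseudoMetricSpace Y] {f : X → Y} {L α : ℝ≥0} (hf : LipschitzWith L f)
    (hrange : Bornology.IsBounded (range f)) (hα : α ≤ 1) :
    MemHolder α f := by
  have hf_zero : HolderWith (ediam (range f)).toNNReal 0 f := fun x y => by
    simpa [ENNReal.coe_toNNReal hrange.ediam_ne_top] using
      edist_le_ediam_of_mem (mem_range_self x) (mem_range_self y)
  exact (hf_zero.of_le_of_le hf.holderWith zero_le hα).memHolder

theorem memHolder_of_contDiff_of_hasCompactSupport [NormedAddCommGroup X] [NormedSpace ℝ X]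
    [NormedAddCommGroup F] [NormedSpace ℝ F] {f : X → F} {α : ℝ≥0} {k : WithTop ℕ∞}
    (hf : ContDiff ℝ k f) (hk : k ≠ 0) (hsupp : HasCompactSupport f) (hα : α ≤ 1) :
    MemHolder α f := by
  obtain ⟨L, hL⟩ := hf.lipschitzWith_of_hasCompactSupport hsupp hk
  exact memHolder_of_lipschitzWith_of_isBounded_range hL
    (hsupp.isCompact_range hf.continuous).isBounded hα

theorem isBounded_range_of_memHolder_of_isBounded_support [PseudoMetricSpace X]
    [PseudoMetricSpace Y] [Zero Y] {f : X → Y} {α : ℝ≥0} (hf : MemHolder α f)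
    (hsupp : Bornology.IsBounded (Function.support f)) :
    Bornology.IsBounded (range f) := by
  obtain ⟨L, hL⟩ := hf
  have himage : Bornology.IsBounded (f '' Function.support f) :=
    isBounded_iff_ediam_ne_top.2 <| ne_top_of_le_ne_top
      (ENNReal.mul_ne_top ENNReal.coe_ne_top
        (ENNReal.rpow_ne_top_of_nonneg α.coe_nonneg hsupp.ediam_ne_top))
      (hL.ediam_image_le _)
  exact (himage.insert 0).subset (Function.range_subset_insert_image_support f)

end Holder

theorem setIntegral_Ioo_rpow_le {a p : ℝ} (ha : 0 < a) (hp : 0 < p) (b : ℝ) :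
    ∫ t in Ioo a b, t ^ (-(p + 1)) ≤ a ^ (-p) / p := by
  have hexp : -(p + 1) < -1 := by linarith
  calc ∫ t in Ioo a b, t ^ (-(p + 1)) ≤ ∫ t in Ioi a, t ^ (-(p + 1)) := by
        refine setIntegral_mono_set (integrableOn_Ioi_rpow_of_lt hexp ha) ?_
          Ioo_subset_Ioi_self.eventuallyLE
        filter_upwards [ae_restrict_mem measurableSet_Ioi] with t ht
        exact Real.rpow_nonneg (ha.trans ht).le _
    _ = a ^ (-p) / p := by
        rw [integral_Ioi_rpow_of_lt hexp ha, show -(p + 1) + 1 = -p by ring, neg_div_neg_eq]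

theorem integrableOn_Ioo_rpow {a : ℝ} (ha : 0 < a) (b s : ℝ) :
    IntegrableOn (fun t : ℝ => t ^ s) (Ioo a b) :=
  (ContinuousOn.integrableOn_Icc fun t ht =>
    (Real.continuousAt_rpow_const t s (.inl (ha.trans_le ht.1).ne')).continuousWithinAt).mono_set
    Ioo_subset_Icc_self

section DilationKernel

variable {E : Type*} [NormedAddCommGroup E] [NormedSpace ℝ E] {χ ψ : E → ℝ} {w : ℝ → ℝ}

/-- The kernel `∫₀¹ χ(x) ψ(x + z/t) w(t) dt`, in which `K_j` is the case of the weight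
`w(t) = binom(n-1, j) t^{-(n+1-j)}`. -/
noncomputable def dilationKernel (w : ℝ → ℝ) (χ ψ : E → ℝ) (x z : E) : ℝ :=
  ∫ t in Ioo (0 : ℝ) 1, χ x * ψ (x + t⁻¹ • z) * w t

theorem norm_lt_of_mul_dilation_ne_zero {R t : ℝ} {x z : E} (hχ : Function.support χ ⊆ ball 0 R)
    (hψ : Function.support ψ ⊆ ball 0 R) (ht : 0 < t) (h : χ x * ψ (x + t⁻¹ • z) ≠ 0) :
    ‖z‖ < 2 * R * t := by
  have hx : ‖x‖ < R := mem_ball_zero_iff.1 (hχ (left_ne_zero_of_mul h))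
  have hxz : ‖x + t⁻¹ • z‖ < R := mem_ball_zero_iff.1 (hψ (right_ne_zero_of_mul h))
  have hz : ‖t⁻¹ • z‖ < 2 * R := by
    calc ‖t⁻¹ • z‖ = ‖(x + t⁻¹ • z) - x‖ := by rw [add_sub_cancel_left]
      _ ≤ ‖x + t⁻¹ • z‖ + ‖x‖ := norm_sub_le _ _
      _ < 2 * R := by linarith
  rwa [norm_smul, norm_inv, Real.norm_of_nonneg ht.le, inv_mul_lt_iff₀ ht, mul_comm t] at hz

theorem dilationKernel_eq_setIntegral_Ioo {R a : ℝ} {x z : E} (hχ : Function.support χ ⊆ ball 0 R)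
    (hψ : Function.support ψ ⊆ ball 0 R) (hR : 0 ≤ R) (ha : 0 ≤ a) (hz : 2 * R * a ≤ ‖z‖) :
    dilationKernel w χ ψ x z = ∫ t in Ioo a 1, χ x * ψ (x + t⁻¹ • z) * w t := by
  refine setIntegral_eq_of_subset_of_forall_sdiff_eq_zero measurableSet_Ioo
    (Ioo_subset_Ioo_left ha) fun t ht => ?_
  have hta : t ≤ a := not_lt.1 fun hat => ht.2 ⟨hat, ht.1.2⟩
  have hvanish : χ x * ψ (x + t⁻¹ • z) = 0 := by
    by_contra hne
    have hlt := norm_lt_of_mul_dilation_ne_zero hχ hψ ht.1.1 hne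
    have hle : 2 * R * t ≤ 2 * R * a := by gcongr
    exact absurd hz (hlt.trans_le hle).not_ge
  rw [hvanish, zero_mul]

theorem integrableOn_dilation_integrand {Mψ A β a : ℝ} (hψ : Continuous ψ)
    (hMψ : ∀ u, ‖ψ u‖ ≤ Mψ)
    (hw : AEStronglyMeasurable w (volume.restrict (Ioo 0 1)))
    (hwA : ∀ t ∈ Ioo (0 : ℝ) 1, ‖w t‖ ≤ A * t ^ (-(β + 1))) (ha : 0 < a) (x z : E) :
    IntegrableOn (fun t => χ x * ψ (x + t⁻¹ • z) * w t) (Ioo a 1) := by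
  have hsub : Ioo a 1 ⊆ Ioo 0 1 := Ioo_subset_Ioo_left ha.le
  have hw_int : IntegrableOn w (Ioo a 1) :=
    ((integrableOn_Ioo_rpow ha 1 _).const_mul A).mono' (hw.mono_set hsub) <| by
      filter_upwards [ae_restrict_mem measurableSet_Ioo] with t ht using hwA t (hsub ht)
  have hcont : ContinuousOn (fun t : ℝ => χ x * ψ (x + t⁻¹ • z)) (Ioo a 1) :=
    continuousOn_const.mul <| hψ.comp_continuousOn <| continuousOn_const.add <|
      (continuousOn_inv₀.mono fun t ht => (hsub ht).1.ne').smul continuousOn_const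
  refine hw_int.bdd_mul (c := ‖χ x‖ * Mψ) (hcont.aestronglyMeasurable measurableSet_Ioo) ?_
  filter_upwards with t
  rw [norm_mul]
  gcongr
  exact hMψ _

theorem norm_mul_dilation_sub_le {Lχ Lψ α : ℝ≥0} {Mχ Mψ t : ℝ} (hχ : HolderWith Lχ α χ)
    (hψ : HolderWith Lψ α ψ) (hMχ : ∀ u, ‖χ u‖ ≤ Mχ) (hMψ : ∀ u, ‖ψ u‖ ≤ Mψ)
    (ht : t ∈ Ioo (0 : ℝ) 1) (x x' y : E) :
    ‖χ x * ψ (x + t⁻¹ • (x - y)) - χ x' * ψ (x' + t⁻¹ • (x' - y))‖ ≤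
      (Lχ * Mψ + Mχ * (Lψ * 2 ^ (α : ℝ))) * (t⁻¹ * ‖x - x'‖) ^ (α : ℝ) := by
  have hMχ_nonneg : 0 ≤ Mχ := (norm_nonneg _).trans (hMχ x)
  have ht_inv : 1 ≤ t⁻¹ := (one_le_inv₀ ht.1).2 ht.2.le
  set u := x + t⁻¹ • (x - y) with hu
  set u' := x' + t⁻¹ • (x' - y) with hu'
  have hdist : dist x x' ≤ t⁻¹ * ‖x - x'‖ := by
    rw [dist_eq_norm]
    exact le_mul_of_one_le_left (norm_nonneg _) ht_inv
  have hdist_u : dist u u' ≤ 2 * (t⁻¹ * ‖x - x'‖) := by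
    have hdiff : u - u' = (1 + t⁻¹) • (x - x') := by rw [hu, hu']; module
    rw [dist_eq_norm, hdiff, norm_smul, Real.norm_of_nonneg (by linarith), ← mul_assoc]
    gcongr
    linarith
  have hχ_sub : ‖χ x - χ x'‖ ≤ Lχ * (t⁻¹ * ‖x - x'‖) ^ (α : ℝ) := hχ.dist_le_of_le hdist
  have hψ_sub : ‖ψ u - ψ u'‖ ≤ Lψ * (2 ^ (α : ℝ) * (t⁻¹ * ‖x - x'‖) ^ (α : ℝ)) := by
    have hsub := hψ.dist_le_of_le hdist_u
    rwa [Real.mul_rpow zero_le_two (mul_nonneg (by linarith) (norm_nonneg _))] at hsub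
  calc ‖χ x * ψ u - χ x' * ψ u'‖ = ‖(χ x - χ x') * ψ u + χ x' * (ψ u - ψ u')‖ := by ring_nf
    _ ≤ ‖χ x - χ x'‖ * ‖ψ u‖ + ‖χ x'‖ * ‖ψ u - ψ u'‖ := by
        simpa only [norm_mul] using norm_add_le ((χ x - χ x') * ψ u) (χ x' * (ψ u - ψ u'))
    _ ≤ Lχ * (t⁻¹ * ‖x - x'‖) ^ (α : ℝ) * Mψ +
          Mχ * (Lψ * (2 ^ (α : ℝ) * (t⁻¹ * ‖x - x'‖) ^ (α : ℝ))) := by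
        gcongr
        exacts [hMψ u, hMχ x']
    _ = _ := by ring

theorem norm_setIntegral_dilation_sub_le {α : ℝ≥0} {A D β a : ℝ} {x x' y : E}
    (hsub : ∀ t ∈ Ioo (0 : ℝ) 1,
      ‖χ x * ψ (x + t⁻¹ • (x - y)) - χ x' * ψ (x' + t⁻¹ • (x' - y))‖ ≤
        D * (t⁻¹ * ‖x - x'‖) ^ (α : ℝ))
    (hwA : ∀ t ∈ Ioo (0 : ℝ) 1, ‖w t‖ ≤ A * t ^ (-(β + 1)))
    (hD : 0 ≤ D) (hA : 0 ≤ A) (hβα : 0 < β + α) (ha : 0 < a) :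
    ‖∫ t in Ioo a 1, (χ x * ψ (x + t⁻¹ • (x - y)) * w t -
        χ x' * ψ (x' + t⁻¹ • (x' - y)) * w t)‖ ≤
      D * A * ‖x - x'‖ ^ (α : ℝ) * (a ^ (-(β + α)) / (β + α)) := by
  have hbound : ∀ t ∈ Ioo a 1, ‖χ x * ψ (x + t⁻¹ • (x - y)) * w t -
      χ x' * ψ (x' + t⁻¹ • (x' - y)) * w t‖ ≤
        D * A * ‖x - x'‖ ^ (α : ℝ) * t ^ (-(β + α + 1)) := fun t ht => by
    have ht_pos : 0 < t := ha.trans ht.1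
    have hsplit : t ^ (-(β + α + 1)) = (t⁻¹) ^ (α : ℝ) * t ^ (-(β + 1)) := by
      rw [Real.inv_rpow ht_pos.le, ← Real.rpow_neg ht_pos.le, ← Real.rpow_add ht_pos]
      ring_nf
    rw [← sub_mul, norm_mul]
    calc _ ≤ D * (t⁻¹ * ‖x - x'‖) ^ (α : ℝ) * (A * t ^ (-(β + 1))) := by
          gcongr
          exacts [hsub t ⟨ht_pos, ht.2⟩, hwA t ⟨ht_pos, ht.2⟩]
      _ = _ := by
          rw [Real.mul_rpow (inv_nonneg.2 ht_pos.le) (norm_nonneg _), hsplit]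
          ring
  calc _ ≤ ∫ t in Ioo a 1, D * A * ‖x - x'‖ ^ (α : ℝ) * t ^ (-(β + α + 1)) :=
        norm_integral_le_of_norm_le ((integrableOn_Ioo_rpow ha 1 _).const_mul _) <| by
          filter_upwards [ae_restrict_mem measurableSet_Ioo] with t ht using hbound t ht
    _ = D * A * ‖x - x'‖ ^ (α : ℝ) * ∫ t in Ioo a 1, t ^ (-(β + α + 1)) :=
        integral_const_mul _ _
    _ ≤ _ := by
        gcongr
        exact setIntegral_Ioo_rpow_le ha hβα 1

/-- The weight `binom(n-1, j) t^{-(n+1-j)}` for which `dilationKernel` is the kernel `K_j`. Both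
subtractions are truncated, so it is meant for `j ≤ n + 1` and `1 ≤ n`. -/
noncomputable def dilationWeight (n j : ℕ) (t : ℝ) : ℝ :=
  (n - 1).choose j * (t ^ (n + 1 - j))⁻¹

theorem dilationKernel_dilationWeight (n j : ℕ) (x z : E) :
    dilationKernel (dilationWeight n j) χ ψ x z = (n - 1).choose j *
      ∫ t in Ioo (0 : ℝ) 1, χ x * ψ (x + t⁻¹ • z) * (t ^ (n + 1 - j))⁻¹ := by
  rw [← integral_const_mul]
  simp only [dilationKernel, dilationWeight, mul_left_comm]

theorem measurable_dilationWeight (n j : ℕ) : Measurable (dilationWeight n j) := by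
  unfold dilationWeight
  fun_prop

theorem norm_dilationWeight {n j : ℕ} (hj : j ≤ n + 1) {t : ℝ} (ht : 0 ≤ t) :
    ‖dilationWeight n j t‖ = (n - 1).choose j * t ^ (-((n : ℝ) - j + 1)) := by
  have hexp : (n : ℝ) - j + 1 = (n + 1 - j : ℕ) := by
    rw [Nat.cast_sub hj]
    push_cast
    ring
  rw [dilationWeight, Real.norm_of_nonneg (by positivity), hexp, Real.rpow_neg ht,
    Real.rpow_natCast]

theorem Kj_regularity_bound_general {α : ℝ≥0} {A β : ℝ} (hα : 0 < α) (hβα : 0 < β + α)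
    (hχ : MemHolder α χ) (hχb : Bornology.IsBounded (Function.support χ))
    (hψ : MemHolder α ψ) (hψb : Bornology.IsBounded (Function.support ψ))
    (hw : AEStronglyMeasurable w (volume.restrict (Ioo 0 1)))
    (hwA : ∀ t ∈ Ioo (0 : ℝ) 1, ‖w t‖ ≤ A * t ^ (-(β + 1))) :
    ∃ C : ℝ, ∀ x x' y : E, 0 < ‖x - y‖ → ‖x - y‖ ≤ ‖x' - y‖ →
      |dilationKernel w χ ψ x (x - y) - dilationKernel w χ ψ x' (x' - y)| ≤
        C * ‖x - x'‖ ^ (α : ℝ) / ‖x - y‖ ^ (β + α) := by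
  obtain ⟨Mχ, hMχ⟩ := (isBounded_range_of_memHolder_of_isBounded_support hχ hχb).exists_norm_le
  obtain ⟨Mψ, hMψ⟩ := (isBounded_range_of_memHolder_of_isBounded_support hψ hψb).exists_norm_le
  rw [forall_mem_range] at hMχ hMψ
  obtain ⟨R, hR, hsupp⟩ := (hχb.union hψb).subset_ball_lt 0 0
  obtain ⟨hχR, hψR⟩ := union_subset_iff.1 hsupp
  obtain ⟨Lχ, hLχ⟩ := hχ
  obtain ⟨Lψ, hLψ⟩ := hψ
  have hMχ_nonneg : 0 ≤ Mχ := (norm_nonneg _).trans (hMχ 0)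
  have hMψ_nonneg : 0 ≤ Mψ := (norm_nonneg _).trans (hMψ 0)
  have hA : 0 ≤ A := nonneg_of_mul_nonneg_left
    ((norm_nonneg _).trans (hwA 2⁻¹ (by norm_num))) (by positivity)
  set D : ℝ := Lχ * Mψ + Mχ * (Lψ * 2 ^ (α : ℝ))
  refine ⟨D * A * (2 * R) ^ (β + α) / (β + α), fun x x' y hr hr' => ?_⟩
  set a : ℝ := ‖x - y‖ / (2 * R)
  have ha : 0 < a := by positivity
  have hRa : 2 * R * a = ‖x - y‖ := mul_div_cancel₀ _ (by positivity)
  have hint := integrableOn_dilation_integrand (χ := χ) (hLψ.continuous hα) hMψ hw hwA ha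
  calc |dilationKernel w χ ψ x (x - y) - dilationKernel w χ ψ x' (x' - y)|
      = ‖∫ t in Ioo a 1, (χ x * ψ (x + t⁻¹ • (x - y)) * w t -
          χ x' * ψ (x' + t⁻¹ • (x' - y)) * w t)‖ := by
        rw [dilationKernel_eq_setIntegral_Ioo hχR hψR hR.le ha.le hRa.le,
          dilationKernel_eq_setIntegral_Ioo hχR hψR hR.le ha.le (hRa.trans_le hr'),
          ← integral_sub (hint x _) (hint x' _), Real.norm_eq_abs]
    _ ≤ D * A * ‖x - x'‖ ^ (α : ℝ) * (a ^ (-(β + α)) / (β + α)) :=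
        norm_setIntegral_dilation_sub_le
          (fun t ht => norm_mul_dilation_sub_le hLχ hLψ hMχ hMψ ht x x' y)
          hwA (by positivity) hA hβα ha
    _ = _ := by
        rw [Real.rpow_neg ha.le, Real.div_rpow hr.le (by positivity)]
        field_simp

end DilationKernel

/-- For `1 ≤ j ≤ n−1` and `0 < α < 1`, the kernel `K_j` satisfies
`|K_j(x, x−y) − K_j(x̄, x̄−y)| ≲ |x−x̄|^α / |x−y|^{n−j+α}` whenever `0 < |x−y| ≤ |x̄−y|`. -/
theorem Kj_regularity_bound
    (n : ℕ) (hn : 2 ≤ n)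
    (Ω B : Set (EuclideanSpace ℝ (Fin n)))
    (hΩo : IsOpen Ω) (hΩb : Bornology.IsBounded Ω)
    (hBball : ∃ c r, 0 < r ∧ B = Metric.ball c r)
    (hBΩ : B ⊆ Ω)
    (hstar : ∀ x ∈ Ω, ∀ y ∈ B, segment ℝ x y ⊆ Ω)
    (Bt : Set (EuclideanSpace ℝ (Fin n)))
    (hBt : ∃ c r, 0 < r ∧ Bt = Metric.ball c r)
    (hΩBt : closure Ω ⊆ Bt)
    (d : ℝ) (hd : d = Metric.diam Bt)
    (χ : EuclideanSpace ℝ (Fin n) → ℝ)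
    (hχ : ContDiff ℝ (⊤ : ℕ∞) χ) (hχc : HasCompactSupport χ)
    (hχsupp : tsupport χ ⊆ Bt) (hχ1 : ∀ x ∈ Ω, χ x = 1)
    (ψ : EuclideanSpace ℝ (Fin n) → ℝ)
    (hψ : ContDiff ℝ (⊤ : ℕ∞) ψ) (hψc : HasCompactSupport ψ)
    (hψsupp : tsupport ψ ⊆ B) (hψint : ∫ x, ψ x = 0)
    (j : ℕ) (hj1 : 1 ≤ j) (hjn : j ≤ n - 1)
    (Kj : EuclideanSpace ℝ (Fin n) → EuclideanSpace ℝ (Fin n) → ℝ)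
    (hKj : ∀ x z, Kj x z = (n - 1).choose j *
      ∫ t in Set.Ioo (0:ℝ) 1, χ x * ψ (x + t⁻¹ • z) * (t ^ (n + 1 - j))⁻¹) :
    ∀ α : ℝ, 0 < α → α < 1 → ∃ C : ℝ,
      ∀ x x' y : EuclideanSpace ℝ (Fin n), 0 < ‖x - y‖ → ‖x - y‖ ≤ ‖x' - y‖ →
        |Kj x (x - y) - Kj x' (x' - y)| ≤
          C * ‖x - x'‖ ^ α / ‖x - y‖ ^ ((n : ℝ) - j + α) := by
  intro α hα0 hα1
  lift α to ℝ≥0 using hα0.le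
  have hα : α ≤ 1 := by exact_mod_cast hα1.le
  have hj : j ≤ n := hjn.trans n.pred_le
  have hβ : 0 ≤ (n : ℝ) - j := sub_nonneg.2 (Nat.cast_le.2 hj)
  obtain rfl : Kj = dilationKernel (dilationWeight n j) χ ψ :=
    funext₂ fun x z => (hKj x z).trans (dilationKernel_dilationWeight n j x z).symm
  exact Kj_regularity_bound_general (NNReal.coe_pos.1 hα0) (add_pos_of_nonneg_of_pos hβ hα0)
    (memHolder_of_contDiff_of_hasCompactSupport hχ (by simp) hχc hα)
    (hχc.isBounded.subset (subset_tsupport χ))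
    (memHolder_of_contDiff_of_hasCompactSupport hψ (by simp) hψc hα)
    (hψc.isBounded.subset (subset_tsupport ψ))
    (measurable_dilationWeight n j).aestronglyMeasurable
    fun t ht => (norm_dilationWeight (hj.trans n.le_succ) ht.1.le).le
end

section
/- Fix an integer j with 1 ≤ j ≤ n−1, define K_j(x,z) = binom(n−1, j) · ∫₀¹ χ(x) ψ(x + z/t) t^{−(n+1−j)} dt, and set S_j1(x) = ∫_{ℝⁿ} χ(y) K_j(x, x−y) dy (an absolutely convergent integral). Then for every α with 0 < α < 1 there is a constant C such that |S_j1(x) − S_j1(x̄)| ≤ C |x−x̄|^α for all x, x̄ ∈ ℝⁿ, i.e. S_j1 belongs to the homogeneous Lipschitz space Λ̇_α(ℝⁿ). -/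
open MeasureTheory Metric Set Filter Topology

/-!
After the change of variables `w = x + t⁻¹ • (x - y)` with `t` fixed, whose Jacobian is `t ^ n`, the
double integral defining `S_j1 x` becomes an average, against the fixed finite measure
`t ^ n * ω t * ψ w dt dw` on `(0, 1) × ℝⁿ`, of the products `χ x * χ ((1 + t) • x - t • w)`. Here
`ω t = t ^ (-(n + 1 - j))`, so `t ^ n * ω t = t ^ (j - 1)` is integrable exactly because `1 ≤ j`.
The products are bounded and Lipschitz in `x`, uniformly in `(t, w)`, hence so is their average, and
a bounded Lipschitz function is `α`-Hölder for every `0 ≤ α ≤ 1`.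
-/

open Module
open scoped NNReal

section BoundedLipschitz

variable {X : Type*} [PseudoMetricSpace X]

lemma holderWith_of_lipschitzWith_of_nndist_le {Y : Type*} [PseudoMetricSpace Y] {f : X → Y}
    {L D α : ℝ≥0} (hL : LipschitzWith L f) (hD : ∀ x y, nndist (f x) (f y) ≤ D) (hα : α ≤ 1) :
    HolderWith (D ^ ((1 - α : ℝ≥0) : ℝ) * L ^ (α : ℝ)) α f := by
  have h_zero : HolderWith D 0 f := fun x y => by
    simpa only [edist_nndist, NNReal.coe_zero, ENNReal.rpow_zero, mul_one, ENNReal.coe_le_coe]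
      using hD x y
  simpa using h_zero.interpolate (holderWith_one.2 hL) (tsub_add_cancel_of_le hα)

lemma lipschitzWith_mul_of_nnnorm_le {f g : X → ℝ} {Kf Kg Mf Mg : ℝ≥0}
    (hf : LipschitzWith Kf f) (hg : LipschitzWith Kg g)
    (hfM : ∀ x, ‖f x‖₊ ≤ Mf) (hgM : ∀ x, ‖g x‖₊ ≤ Mg) :
    LipschitzWith (Mf * Kg + Kf * Mg) fun x => f x * g x := by
  refine lipschitzWith_iff_dist_le_mul.2 fun x y => ?_
  calc dist (f x * g x) (f y * g y)
      = ‖f x * (g x - g y) + (f x - f y) * g y‖ := by rw [Real.dist_eq, Real.norm_eq_abs]; ring_nf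
    _ ≤ ‖f x‖ * dist (g x) (g y) + dist (f x) (f y) * ‖g y‖ := by
        simpa only [norm_mul, dist_eq_norm] using
          norm_add_le (f x * (g x - g y)) ((f x - f y) * g y)
    _ ≤ Mf * (Kg * dist x y) + Kf * dist x y * Mg := by
        gcongr
        exacts [hfM x, hg.dist_le_mul x y, hf.dist_le_mul x y, hgM y]
    _ = (Mf * Kg + Kf * Mg : ℝ≥0) * dist x y := by push_cast; ring

end BoundedLipschitz

section WeightedAverage

variable {P : Type*} [MeasurableSpace P] {m : Measure P} {G : P → ℝ}

lemma norm_integral_mul_le (hG : Integrable G m) {F : P → ℝ} {M : ℝ}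
    (hF : ∀ᵐ p ∂m, ‖F p‖ ≤ M) : ‖∫ p, F p * G p ∂m‖ ≤ M * ∫ p, ‖G p‖ ∂m := by
  rw [← integral_const_mul]
  refine norm_integral_le_of_norm_le (hG.norm.const_mul M) ?_
  filter_upwards [hF] with p hp
  rw [norm_mul]
  gcongr

lemma lipschitzWith_integral_mul {X : Type*} [PseudoMetricSpace X] (hG : Integrable G m)
    {F : X → P → ℝ} {K : ℝ≥0} (hFG : ∀ x, Integrable (fun p => F x p * G p) m)
    (hF : ∀ᵐ p ∂m, LipschitzWith K (F · p)) :
    LipschitzWith (K * ∫ p, ‖G p‖ ∂m).toNNReal fun x => ∫ p, F x p * G p ∂m := by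
  refine LipschitzWith.of_dist_le' fun x y => ?_
  have h_diff : ∀ᵐ p ∂m, ‖F x p - F y p‖ ≤ K * dist x y := by
    filter_upwards [hF] with p hp
    simpa only [dist_eq_norm] using hp.dist_le_mul x y
  calc dist (∫ p, F x p * G p ∂m) (∫ p, F y p * G p ∂m)
      = ‖∫ p, (F x p - F y p) * G p ∂m‖ := by
        simp only [dist_eq_norm, sub_mul, integral_sub (hFG x) (hFG y)]
    _ ≤ K * dist x y * ∫ p, ‖G p‖ ∂m := norm_integral_mul_le hG h_diff
    _ = K * (∫ p, ‖G p‖ ∂m) * dist x y := by ring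

lemma exists_holderWith_integral_mul {X : Type*} [PseudoMetricSpace X] (hG : Integrable G m)
    {F : X → P → ℝ} {K M α : ℝ≥0} (hFm : ∀ x, AEStronglyMeasurable (F x) m)
    (hFM : ∀ x p, ‖F x p‖₊ ≤ M) (hF : ∀ᵐ p ∂m, LipschitzWith K (F · p)) (hα : α ≤ 1) :
    ∃ C, HolderWith C α fun x => ∫ p, F x p * G p ∂m := by
  have h_integrable (x : X) : Integrable (fun p => F x p * G p) m :=
    hG.bdd_mul (hFm x) (ae_of_all m (hFM x))
  have h_bound (x : X) : ‖∫ p, F x p * G p ∂m‖₊ ≤ (M * ∫ p, ‖G p‖ ∂m).toNNReal :=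
    NNReal.le_toNNReal_of_coe_le (norm_integral_mul_le hG (ae_of_all m (hFM x)))
  have h_nndist (x y : X) : nndist (∫ p, F x p * G p ∂m) (∫ p, F y p * G p ∂m) ≤
      (M * ∫ p, ‖G p‖ ∂m).toNNReal + (M * ∫ p, ‖G p‖ ∂m).toNNReal := by
    rw [nndist_eq_nnnorm]
    exact (nnnorm_sub_le _ _).trans (add_le_add (h_bound x) (h_bound y))
  exact ⟨_, holderWith_of_lipschitzWith_of_nndist_le
    (lipschitzWith_integral_mul hG h_integrable hF) h_nndist hα⟩

end WeightedAverage

section JacobianMeasure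

/-- The measure `t ^ n dν(t)`: on `(0, ∞)`, the weight `t ^ n` is the Jacobian of the dilation by
`t` of an `n`-dimensional space. -/
noncomputable def jacobianMeasure (n : ℕ) (ν : Measure ℝ) : Measure ℝ :=
  ν.withDensity fun t => ENNReal.ofReal (t ^ n)

variable {n : ℕ} {ν : Measure ℝ}

instance [SFinite ν] : SFinite (jacobianMeasure n ν) := by
  unfold jacobianMeasure
  infer_instance

lemma integrable_jacobianMeasure_iff (hν : ∀ᵐ t ∂ν, 0 < t) {ω : ℝ → ℝ} :
    Integrable ω (jacobianMeasure n ν) ↔ Integrable (fun t => t ^ n * ω t) ν := by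
  rw [jacobianMeasure, integrable_withDensity_iff_integrable_smul' (by fun_prop) (by simp)]
  refine integrable_congr ?_
  filter_upwards [hν] with t ht
  rw [ENNReal.toReal_ofReal (by positivity), smul_eq_mul]

lemma integrableOn_Ioo_pow_mul_inv_pow {m : ℕ} (hmn : m ≤ n) (a b : ℝ) :
    IntegrableOn (fun t : ℝ => t ^ n * (t ^ m)⁻¹) (Ioo a b) := by
  have h_pow : IntegrableOn (fun t : ℝ => t ^ (n - m)) (Ioo a b) :=
    (continuous_pow _).integrableOn_Icc.mono_set Ioo_subset_Icc_self
  refine h_pow.congr (ae_restrict_of_ae ?_)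
  filter_upwards [Measure.ae_ne volume 0] with t ht
  exact pow_sub₀ t ht hmn

end JacobianMeasure

section Dilation

variable {E : Type*} [NormedAddCommGroup E] [NormedSpace ℝ E] [MeasurableSpace E]
  {ν : Measure ℝ} {χ ψ : E → ℝ} {ω : ℝ → ℝ} {x : E}

/-- The average of `χ ((1 + t) • x - t • w)` against `t ^ n * ω t * ψ w dν(t) dμ(w)`: this is what
`∫ y, χ y * ∫ t, ω t * ψ (x + t⁻¹ • (x - y))` becomes in the variable `w = x + t⁻¹ • (x - y)`. -/
noncomputable def dilationAverage (μ : Measure E) (ν : Measure ℝ) (χ ψ : E → ℝ) (ω : ℝ → ℝ)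
    (x : E) : ℝ :=
  ∫ q : ℝ × E, χ ((1 + q.1) • x - q.1 • q.2) * (ω q.1 * ψ q.2)
    ∂(jacobianMeasure (finrank ℝ E) ν).prod μ

lemma dilation_integrand_ae_eq {μ : Measure E} (hν : ∀ᵐ t ∂ν, 0 < t) :
    (fun p : ℝ × E => χ p.2 * (ω p.1 * ψ (x + p.1⁻¹ • (x - p.2)))) =ᵐ[ν.prod μ]
      (fun q : ℝ × E => χ ((1 + q.1) • x - q.1 • q.2) * (ω q.1 * ψ q.2)) ∘
        fun p => (p.1, x + p.1⁻¹ • (x - p.2)) := by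
  filter_upwards [Measure.quasiMeasurePreserving_fst.ae hν] with p hp
  have h_inverse : (1 + p.1) • x - p.1 • (x + p.1⁻¹ • (x - p.2)) = p.2 := by
    rw [smul_add, smul_inv_smul₀ hp.ne']
    module
  simp only [Function.comp_apply, h_inverse]

variable [FiniteDimensional ℝ E] [BorelSpace E] (μ : Measure E) [μ.IsAddHaarMeasure]

lemma map_add_inv_smul_sub (x : E) {t : ℝ} (ht : 0 < t) :
    μ.map (fun y => x + t⁻¹ • (x - y)) = ENNReal.ofReal (t ^ finrank ℝ E) • μ := by
  have h_affine : (fun y => x + t⁻¹ • (x - y)) = (x + t⁻¹ • x + ·) ∘ ((-t⁻¹) • · : E → E) := by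
    funext y
    simp only [Function.comp_apply]
    module
  have h_jacobian : |((-t⁻¹) ^ finrank ℝ E)⁻¹| = t ^ finrank ℝ E := by
    rw [abs_inv, abs_pow, abs_neg, abs_inv, abs_of_pos ht, inv_pow, inv_inv]
  rw [h_affine, ← Measure.map_map (by fun_prop) (by fun_prop),
    Measure.map_addHaar_smul μ (neg_ne_zero.2 (inv_ne_zero ht.ne')), h_jacobian,
    Measure.map_smul, map_add_left_eq_self]

lemma measurePreserving_prod_add_inv_smul_sub (hν : ∀ᵐ t ∂ν, 0 < t) (x : E) :
    MeasurePreserving (fun p : ℝ × E => (p.1, x + p.1⁻¹ • (x - p.2)))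
      (ν.prod μ) ((jacobianMeasure (finrank ℝ E) ν).prod μ) := by
  have h_meas : Measurable fun p : ℝ × E => (p.1, x + p.1⁻¹ • (x - p.2)) := by fun_prop
  refine ⟨h_meas, Measure.ext fun s hs => ?_⟩
  rw [Measure.map_apply h_meas hs, Measure.prod_apply (h_meas hs), Measure.prod_apply hs,
    jacobianMeasure, lintegral_withDensity_eq_lintegral_mul _ (by fun_prop)
      (measurable_measure_prodMk_left hs)]
  refine lintegral_congr_ae ?_
  filter_upwards [hν] with t ht
  calc μ ((fun y => x + t⁻¹ • (x - y)) ⁻¹' (Prod.mk t ⁻¹' s))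
      = μ.map (fun y => x + t⁻¹ • (x - y)) (Prod.mk t ⁻¹' s) :=
        (Measure.map_apply (by fun_prop) (measurable_prodMk_left hs)).symm
    _ = ENNReal.ofReal (t ^ finrank ℝ E) * μ (Prod.mk t ⁻¹' s) := by
        rw [map_add_inv_smul_sub μ x ht, Measure.smul_apply, smul_eq_mul]

variable {μ} {M : ℝ≥0}

lemma integrable_dilation_integrand (hν : ∀ᵐ t ∂ν, 0 < t) (hχ : Measurable χ)
    (hχM : ∀ x, ‖χ x‖₊ ≤ M) (hω : Integrable ω (jacobianMeasure (finrank ℝ E) ν))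
    (hψ : Integrable ψ μ) :
    Integrable (fun p : ℝ × E => χ p.2 * (ω p.1 * ψ (x + p.1⁻¹ • (x - p.2)))) (ν.prod μ) := by
  have h_dilated : Integrable (fun q : ℝ × E => χ ((1 + q.1) • x - q.1 • q.2) * (ω q.1 * ψ q.2))
      ((jacobianMeasure (finrank ℝ E) ν).prod μ) :=
    (hω.mul_prod hψ).bdd_mul (hχ.comp (by fun_prop)).aestronglyMeasurable
      (ae_of_all _ fun _ => hχM _)
  exact ((measurePreserving_prod_add_inv_smul_sub μ hν x).integrable_comp_of_integrable
    h_dilated).congr (dilation_integrand_ae_eq hν).symm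

lemma integral_integral_eq_dilationAverage [SFinite ν] (hν : ∀ᵐ t ∂ν, 0 < t) (hχ : Measurable χ)
    (hχM : ∀ x, ‖χ x‖₊ ≤ M) (hω : Integrable ω (jacobianMeasure (finrank ℝ E) ν))
    (hψ : Integrable ψ μ) (x : E) :
    ∫ y, ∫ t, χ y * (ω t * ψ (x + t⁻¹ • (x - y))) ∂ν ∂μ = dilationAverage μ ν χ ψ ω x := by
  have h_pres := measurePreserving_prod_add_inv_smul_sub μ hν x
  have h_meas : AEStronglyMeasurable
      (fun q : ℝ × E => χ ((1 + q.1) • x - q.1 • q.2) * (ω q.1 * ψ q.2))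
      ((jacobianMeasure (finrank ℝ E) ν).prod μ) :=
    (hχ.comp (by fun_prop)).aestronglyMeasurable.mul (hω.mul_prod hψ).aestronglyMeasurable
  rw [dilationAverage, ← h_pres.map_eq, integral_map h_pres.aemeasurable (h_pres.map_eq ▸ h_meas),
    ← integral_prod_symm _ (integrable_dilation_integrand hν hχ hχM hω hψ)]
  exact integral_congr_ae (dilation_integrand_ae_eq hν)

end Dilation

section Holder

variable {E : Type*} [NormedAddCommGroup E] [NormedSpace ℝ E] {χ : E → ℝ} {L M : ℝ≥0}

lemma lipschitzWith_mul_comp_one_add_smul_sub (hχ : LipschitzWith L χ) (hχM : ∀ x, ‖χ x‖₊ ≤ M)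
    {t : ℝ} (ht : t ∈ Ioo (0 : ℝ) 1) (w : E) :
    LipschitzWith (M * (L * 2) + L * M) fun x => χ x * χ ((1 + t) • x - t • w) := by
  have h_dilation : LipschitzWith 2 fun x : E => (1 + t) • x - t • w := by
    refine lipschitzWith_iff_dist_le_mul.2 fun x y => ?_
    rw [dist_sub_right, dist_smul₀, Real.norm_of_nonneg (by linarith [ht.1])]
    gcongr
    rw [NNReal.coe_ofNat]
    linarith [ht.2]
  exact lipschitzWith_mul_of_nnnorm_le hχ (hχ.comp h_dilation) hχM fun _ => hχM _

lemma exists_holderWith_mul_dilationAverage [FiniteDimensional ℝ E] [MeasurableSpace E]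
    [BorelSpace E] {μ : Measure E} [SFinite μ] {ν : Measure ℝ}
    (hν : ∀ᵐ t ∂ν, t ∈ Ioo (0 : ℝ) 1) {ψ : E → ℝ} {ω : ℝ → ℝ} (hχ : LipschitzWith L χ)
    (hχM : ∀ x, ‖χ x‖₊ ≤ M) (hω : Integrable ω (jacobianMeasure (finrank ℝ E) ν))
    (hψ : Integrable ψ μ) {α : ℝ≥0} (hα : α ≤ 1) :
    ∃ C, HolderWith C α fun x => χ x * dilationAverage μ ν χ ψ ω x := by
  have h_mem : ∀ᵐ q ∂(jacobianMeasure (finrank ℝ E) ν).prod μ, q.1 ∈ Ioo (0 : ℝ) 1 :=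
    Measure.quasiMeasurePreserving_fst.ae ((withDensity_absolutelyContinuous ν _).ae_le hν)
  have h_meas (x : E) :
      Measurable fun q : ℝ × E => χ x * χ ((1 + q.1) • x - q.1 • q.2) :=
    (hχ.continuous.measurable.comp (by fun_prop)).const_mul (χ x)
  have h_bound (x : E) (q : ℝ × E) : ‖χ x * χ ((1 + q.1) • x - q.1 • q.2)‖₊ ≤ M * M := by
    rw [nnnorm_mul]
    exact mul_le_mul' (hχM _) (hχM _)
  have h_lipschitz := h_mem.mono fun q hq =>
    lipschitzWith_mul_comp_one_add_smul_sub hχ hχM hq q.2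
  simpa only [dilationAverage, ← integral_const_mul, mul_assoc] using
    exists_holderWith_integral_mul (hω.mul_prod hψ)
      (fun x => (h_meas x).aestronglyMeasurable) h_bound h_lipschitz hα

end Holder

theorem Sj_one_in_homogeneous_lipschitz_general
    {E : Type*} [NormedAddCommGroup E] [NormedSpace ℝ E] [FiniteDimensional ℝ E]
    [MeasurableSpace E] [BorelSpace E] {μ : Measure E} [μ.IsAddHaarMeasure]
    {χ ψ : E → ℝ} {L : ℝ≥0} (hχ : LipschitzWith L χ) (hχb : Bornology.IsBounded (range χ))
    (hψ : Integrable ψ μ) {ω : ℝ → ℝ}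
    (hω : IntegrableOn (fun t => t ^ finrank ℝ E * ω t) (Ioo 0 1))
    {c : ℝ} {K : E → E → ℝ}
    (hK : ∀ x z, K x z = c * ∫ t in Ioo (0 : ℝ) 1, χ x * ψ (x + t⁻¹ • z) * ω t)
    {S : E → ℝ} (hS : ∀ x, S x = ∫ y, χ y * K x (x - y) ∂μ) :
    (∀ x, Integrable (fun y => χ y * K x (x - y)) μ) ∧
      ∀ α : ℝ, 0 ≤ α → α ≤ 1 → ∃ C : ℝ, ∀ x x', |S x - S x'| ≤ C * ‖x - x'‖ ^ α := by
  obtain ⟨M, hM⟩ : ∃ M : ℝ≥0, ∀ x, ‖χ x‖₊ ≤ M := by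
    obtain ⟨M, hM₀, hM⟩ := hχb.exists_pos_norm_le
    exact ⟨⟨M, hM₀.le⟩, forall_mem_range.1 hM⟩
  have h_mem : ∀ᵐ t ∂volume.restrict (Ioo 0 1), t ∈ Ioo (0 : ℝ) 1 :=
    ae_restrict_mem measurableSet_Ioo
  have h_pos := h_mem.mono fun t ht => ht.1
  have hω' := (integrable_jacobianMeasure_iff h_pos).2 hω
  have h_kernel (x y : E) : χ y * K x (x - y) =
      c * χ x * ∫ t in Ioo (0 : ℝ) 1, χ y * (ω t * ψ (x + t⁻¹ • (x - y))) := by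
    simp only [hK, mul_assoc, integral_const_mul, mul_comm (ω _)]
    ring
  refine ⟨fun x => ?_, fun α hα₀ hα₁ => ?_⟩
  · simp only [h_kernel]
    have h_integrable :=
      integrable_dilation_integrand (x := x) h_pos hχ.continuous.measurable hM hω' hψ
    exact h_integrable.integral_prod_right.const_mul _
  · lift α to ℝ≥0 using hα₀
    have hS_average : S = c • fun x =>
        χ x * dilationAverage μ (volume.restrict (Ioo 0 1)) χ ψ ω x := by
      funext x
      simp only [hS, h_kernel]
      rw [integral_const_mul,
        integral_integral_eq_dilationAverage h_pos hχ.continuous.measurable hM hω' hψ,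
        mul_assoc]
      rfl
    obtain ⟨C, hC⟩ := exists_holderWith_mul_dilationAverage h_mem hχ hM hω' hψ hα₁
    have hS_holder := hS_average ▸ hC.smul c
    exact ⟨_, fun x x' => by
      simpa only [dist_eq_norm, Real.norm_eq_abs] using hS_holder.dist_le x x'⟩

/-- For `1 ≤ j ≤ n−1`, the function
`S_j1(x) = ∫ χ(y) K_j(x, x−y) dy` (an absolutely convergent integral) belongs to
`Λ̇_α(ℝⁿ)` for every `0 < α < 1`. -/
theorem Sj_one_in_homogeneous_lipschitz
    (n : ℕ) (hn : 2 ≤ n)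
    (Ω B : Set (EuclideanSpace ℝ (Fin n)))
    (hΩo : IsOpen Ω) (hΩb : Bornology.IsBounded Ω)
    (hBball : ∃ c r, 0 < r ∧ B = Metric.ball c r)
    (hBΩ : B ⊆ Ω)
    (hstar : ∀ x ∈ Ω, ∀ y ∈ B, segment ℝ x y ⊆ Ω)
    (Bt : Set (EuclideanSpace ℝ (Fin n)))
    (hBt : ∃ c r, 0 < r ∧ Bt = Metric.ball c r)
    (hΩBt : closure Ω ⊆ Bt)
    (d : ℝ) (hd : d = Metric.diam Bt)
    (χ : EuclideanSpace ℝ (Fin n) → ℝ)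
    (hχ : ContDiff ℝ (⊤ : ℕ∞) χ) (hχc : HasCompactSupport χ)
    (hχsupp : tsupport χ ⊆ Bt) (hχ1 : ∀ x ∈ Ω, χ x = 1)
    (ψ : EuclideanSpace ℝ (Fin n) → ℝ)
    (hψ : ContDiff ℝ (⊤ : ℕ∞) ψ) (hψc : HasCompactSupport ψ)
    (hψsupp : tsupport ψ ⊆ B) (hψint : ∫ x, ψ x = 0)
    (j : ℕ) (hj1 : 1 ≤ j) (hjn : j ≤ n - 1)
    (Kj : EuclideanSpace ℝ (Fin n) → EuclideanSpace ℝ (Fin n) → ℝ)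
    (hKj : ∀ x z, Kj x z = (n - 1).choose j *
      ∫ t in Set.Ioo (0:ℝ) 1, χ x * ψ (x + t⁻¹ • z) * (t ^ (n + 1 - j))⁻¹)
    (Sj1 : EuclideanSpace ℝ (Fin n) → ℝ)
    (hSj1 : ∀ x, Sj1 x = ∫ y, χ y * Kj x (x - y)) :
    (∀ x : EuclideanSpace ℝ (Fin n),
      Integrable (fun y : EuclideanSpace ℝ (Fin n) => χ y * Kj x (x - y))) ∧
    (∀ α : ℝ, 0 < α → α < 1 → ∃ C : ℝ,
      ∀ x x' : EuclideanSpace ℝ (Fin n), |Sj1 x - Sj1 x'| ≤ C * ‖x - x'‖ ^ α) := by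
  obtain ⟨L, hL⟩ := (hχ.of_le (by simp)).lipschitzWith_of_hasCompactSupport hχc one_ne_zero
  exact (Sj_one_in_homogeneous_lipschitz_general hL (hχc.isCompact_range hχ.continuous).isBounded
    (hψ.continuous.integrable_of_hasCompactSupport hψc)
    (integrableOn_Ioo_pow_mul_inv_pow (by rw [finrank_euclideanSpace_fin]; omega) 0 1)
    hKj hSj1).imp_right fun h α hα₀ hα₁ => h α hα₀.le hα₁.le
end
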